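/- Let n ≥ 1 be a natural number. Suppose Ψ : [0,∞)×ℝ×ℝ×ℝⁿ → (0,∞) has the product form Ψ(t,u,v,w₁,…,wₙ) = ∏_{i=1}^{n} ψ(t,u,v,wᵢ) for some bounded, continuous, strictly positive ψ : [0,∞)×ℝ×ℝ×ℝ → (0,∞), and that Ψ satisfies, for all t ≥ 0, u, v ∈ ℝ and w₁,…,wₙ ∈ ℝ, the n-variable integral equation: log Ψ(t,u,v,w₁,…,wₙ) + Σ_{i=1}^{n} ∫₀ᵗ h₂(y,wᵢ) dy = ∫₀ᵗ (Σ_{i=1}^{n} h₂(y,wᵢ)) · [∫_{ℝⁿ} exp(Σ_{k=1}^{n} h₁(t−y,u,v,z_k)) · (∏_{k=1}^{n} g(z_k)) · Ψ(t−y,u,v,z₁,…,zₙ) dz₁…dzₙ] dy. Then the function φ(t,u,v) := ∫_ℝ exp(h₁(t,u,v,z)) · Ψ(t,u,v,z,…,z)^{1/n} · g(z) dz solves the original integral equation with f(x) = xⁿ, i.e. for all t ≥ 0 and u, v ∈ ℝ: φ(t,u,v) = ∫_ℝ exp(h₁(t,u,v,z)) · exp(∫₀ᵗ ((φ(t−y,u,v))ⁿ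 − 1) · h₂(y,z) dy) · g(z) dz. -/

import Mathlib

/-! Evaluating the `n`-variable equation on the diagonal `w = (z, …, z)` gives `n` times the
logarithm of the wanted identity `ψ t u v z = exp (∫₀ᵗ (φ (t - y) u v ^ n - 1) * h₂ y z dy)`: on the diagonal
`Ψ ^ (1 / n) = ψ`, so `φ = ∫ exp h₁ * ψ * g`, and by Fubini the inner integral over `ℝⁿ` is `φ ^ n`.
Merging the two time integrals into one needs `y ↦ h₂ y z * φ (t - y) u v ^ n` to be integrable;
this holds because `φ` is continuous in time, by dominated convergence (`continuousOn_weighted_integral`).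
-/

open MeasureTheory Real

/-- Dominated convergence with dominating function `C * g`, where `C` bounds `|F|` on
`[0, t] × [0, M]`; the compact support of `g` makes values of `F` outside this set irrelevant. -/
lemma continuousOn_weighted_integral {M t : ℝ} {g : ℝ → ℝ} (hg_nonneg : ∀ z, 0 ≤ g z)
    (hg_int : Integrable g) (hg_supp : ∀ z, z ∉ Set.Icc (0 : ℝ) M → g z = 0) {F : ℝ × ℝ → ℝ}
    (hF : ContinuousOn F {p : ℝ × ℝ | 0 ≤ p.1}) :
    ContinuousOn (fun s => ∫ z, F (s, z) * g z) (Set.Icc 0 t) := by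
  obtain ⟨C, hC⟩ := (isCompact_Icc.prod isCompact_Icc :
    IsCompact (Set.Icc (0 : ℝ) t ×ˢ Set.Icc (0 : ℝ) M)).exists_bound_of_continuousOn
      (hF.mono fun p hp => hp.1.1)
  refine continuousOn_of_dominated (bound := fun z => C * g z) ?_ ?_ (hg_int.const_mul C) ?_
  · intro s hs
    have hc : Continuous fun z => F (s, z) :=
      hF.comp_continuous (by fun_prop) fun _ => hs.1
    exact hc.aestronglyMeasurable.mul hg_int.aestronglyMeasurable
  · intro s hs
    refine Filter.Eventually.of_forall fun z => ?_
    by_cases hz : z ∈ Set.Icc (0 : ℝ) M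
    · rw [norm_mul, Real.norm_of_nonneg (hg_nonneg z)]
      exact mul_le_mul_of_nonneg_right (hC (s, z) ⟨hs, hz⟩) (hg_nonneg z)
    · simp [hg_supp z hz]
  · refine Filter.Eventually.of_forall fun z => ?_
    exact (hF.comp (f := fun s : ℝ => (s, z)) (by fun_prop) fun s hs => hs.1).mul continuousOn_const

/-- If Ψ has product form ∏ᵢ ψ(t,u,v,wᵢ) and solves the n-variable integral
equation, then φ(t,u,v) := ∫ exp(h₁(t,u,v,z)) · Ψ(t,u,v,z,…,z)^{1/n} · g(z) dz solves the
original integral equation with f(x) = xⁿ. -/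
theorem grishechkin_product_solution
    (n : ℕ) (hn : 1 ≤ n)
    (M : ℝ) (hM : 0 < M)
    (g : ℝ → ℝ) (hg_nonneg : ∀ z, 0 ≤ g z) (hg_int : Integrable g)
    (hg_supp : ∀ z, z ∉ Set.Icc (0 : ℝ) M → g z = 0)
    (hg_prob : (∫ z, g z) = 1)
    (h₁ : ℝ → ℝ → ℝ → ℝ → ℝ) (h₂ : ℝ → ℝ → ℝ)
    (hh₁ : ContinuousOn (fun p : ℝ × ℝ × ℝ × ℝ => h₁ p.1 p.2.1 p.2.2.1 p.2.2.2)
      {p : ℝ × ℝ × ℝ × ℝ | 0 ≤ p.1})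
    (hh₂ : ContinuousOn (fun p : ℝ × ℝ => h₂ p.1 p.2) {p : ℝ × ℝ | 0 ≤ p.1})
    (hT_int : ∀ t u v : ℝ, Integrable (fun z => Real.exp (h₁ t u v z) * g z))
    (ψ : ℝ → ℝ → ℝ → ℝ → ℝ)
    (hψ_pos : ∀ t u v w : ℝ, 0 < ψ t u v w)
    (hψ_bdd : ∃ B : ℝ, ∀ t u v w : ℝ, |ψ t u v w| ≤ B)
    (hψ_cont : ContinuousOn (fun p : ℝ × ℝ × ℝ × ℝ => ψ p.1 p.2.1 p.2.2.1 p.2.2.2)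
      {p : ℝ × ℝ × ℝ × ℝ | 0 ≤ p.1})
    (Ψ : ℝ → ℝ → ℝ → (Fin n → ℝ) → ℝ)
    (hΨ_prod : ∀ (t u v : ℝ) (w : Fin n → ℝ), Ψ t u v w = ∏ i, ψ t u v (w i))
    (hΨ_eq : ∀ t : ℝ, 0 ≤ t → ∀ u v : ℝ, ∀ w : Fin n → ℝ,
      Real.log (Ψ t u v w) + (∑ i, ∫ y in (0:ℝ)..t, h₂ y (w i)) =
        ∫ y in (0:ℝ)..t, (∑ i, h₂ y (w i)) *
          (∫ z : Fin n → ℝ, Real.exp (∑ k, h₁ (t - y) u v (z k)) *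
            (∏ k, g (z k)) * Ψ (t - y) u v z))
    (φ : ℝ → ℝ → ℝ → ℝ)
    (hφ : ∀ t u v : ℝ,
      φ t u v = ∫ z, Real.exp (h₁ t u v z) *
        (Ψ t u v (fun _ => z)) ^ ((1 : ℝ) / n) * g z) :
    ∀ t : ℝ, 0 ≤ t → ∀ u v : ℝ,
      φ t u v = ∫ z, Real.exp (h₁ t u v z) *
        Real.exp (∫ y in (0:ℝ)..t, ((φ (t - y) u v) ^ n - 1) * h₂ y z) * g z := by
  have hn0 : (n : ℝ) ≠ 0 := by positivity
  have hroot : ∀ t u v z, (Ψ t u v (fun _ => z)) ^ ((1 : ℝ) / n) = ψ t u v z := by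
    intro t u v z
    rw [hΨ_prod, Finset.prod_const, Finset.card_univ, Fintype.card_fin, one_div]
    exact Real.pow_rpow_inv_natCast (hψ_pos t u v z).le (by omega)
  have hφ' : ∀ t u v, φ t u v = ∫ z, Real.exp (h₁ t u v z) * ψ t u v z * g z := by
    intro t u v
    simp only [hφ, hroot]
  have hinner : ∀ t u v, (∫ z : Fin n → ℝ, Real.exp (∑ k, h₁ t u v (z k)) *
      (∏ k, g (z k)) * Ψ t u v z) = φ t u v ^ n := by
    intro t u v
    have := integral_fintype_prod_volume_eq_pow (ι := Fin n)
      (fun z => Real.exp (h₁ t u v z) * ψ t u v z * g z)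
    rw [Fintype.card_fin] at this
    rw [hφ', ← this]
    refine integral_congr_ae (Filter.Eventually.of_forall fun z => ?_)
    simp only [hΨ_prod, Real.exp_sum, Finset.prod_mul_distrib]
    ring
  intro t ht u v
  have hφc : ContinuousOn (fun s => φ s u v) (Set.Icc 0 t) := by
    simp only [hφ']
    refine continuousOn_weighted_integral (F := fun p => Real.exp (h₁ p.1 u v p.2) * ψ p.1 u v p.2)
      hg_nonneg hg_int hg_supp ?_
    have hm : Continuous fun p : ℝ × ℝ => (p.1, u, v, p.2) := by fun_prop
    exact (hh₁.comp hm.continuousOn fun p hp => hp).rexp.mul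
      (hψ_cont.comp hm.continuousOn fun p hp => hp)
  have hφr : ContinuousOn (fun y => φ (t - y) u v) (Set.Icc 0 t) :=
    hφc.comp (f := fun y => t - y) (by fun_prop)
      fun y hy => ⟨by linarith [hy.2], by linarith [hy.1]⟩
  have hψ_exp : ∀ z, ψ t u v z =
      Real.exp (∫ y in (0:ℝ)..t, ((φ (t - y) u v) ^ n - 1) * h₂ y z) := by
    intro z
    have hh : ContinuousOn (fun y => h₂ y z) (Set.Icc 0 t) :=
      hh₂.comp (f := fun y : ℝ => (y, z)) (by fun_prop) fun y hy => hy.1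
    have hi1 : IntervalIntegrable (fun y => h₂ y z) volume 0 t :=
      hh.intervalIntegrable_of_Icc ht
    have hi2 : IntervalIntegrable (fun y => φ (t - y) u v ^ n * h₂ y z) volume 0 t :=
      ((hφr.pow n).mul hh).intervalIntegrable_of_Icc ht
    have key := hΨ_eq t ht u v (fun _ => z)
    simp only [hinner] at key
    simp only [hΨ_prod, Finset.prod_const, Finset.sum_const, Finset.card_univ,
      Fintype.card_fin, nsmul_eq_mul, Real.log_pow, mul_assoc,
      intervalIntegral.integral_const_mul] at key
    rw [← mul_add] at key
    have key' := mul_left_cancel₀ hn0 key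
    simp only [sub_mul, one_mul]
    rw [intervalIntegral.integral_sub hi2 hi1]
    simp only [mul_comm (φ _ u v ^ n)]
    rw [← key', add_sub_cancel_right, Real.exp_log (hψ_pos t u v z)]
  rw [hφ']
  simp only [← hψ_exp]
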